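/- arXiv:1007.4621 — 2 statements merged into one kernel-verified Lean document; each statement's English description precedes it below -/
import Mathlib

section
/- For every prime power q, one has h(3) < h(2)^{3/2}. -/
/-!
Put `a_P = u_P² + v_P²`, so that `h(2) = ∑ a_P`. For `l ≥ 2` superadditivity of `t ↦ t ^ (l / 2)`
gives `u_P ^ l + (-1) ^ l * v_P ^ l ≤ a_P ^ (l / 2)`. For `l > 2` the same superadditivity, applied
to the whole series and strict because at least two of the `a_P` are positive, gives
`∑ a_P ^ (l / 2) < (∑ a_P) ^ (l / 2)`. The series `h(2)` converges because `a_P ≤ 5 |P|⁻²`, while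
there are at most `q ^ (n + 1)` polynomials of degree `n`.
-/

open Polynomial

/-- `u_P = -log(1 - |P|⁻¹)` where `|P| = q^(deg P)`. -/
noncomputable def uP {Fq : Type} [Field Fq] [Fintype Fq] (P : Polynomial Fq) : ℝ :=
  -Real.log (1 - ((Fintype.card Fq : ℝ) ^ P.natDegree)⁻¹)

/-- `v_P = log(1 + |P|⁻¹)` where `|P| = q^(deg P)`. -/
noncomputable def vP {Fq : Type} [Field Fq] [Fintype Fq] (P : Polynomial Fq) : ℝ :=
  Real.log (1 + ((Fintype.card Fq : ℝ) ^ P.natDegree)⁻¹)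

/-- `h(λ) = ∑_P (u_P^λ + (-1)^λ v_P^λ)`, the sum over all monic irreducible
polynomials `P ∈ Fq[X]`. -/
noncomputable def hfun (Fq : Type) [Field Fq] [Fintype Fq] (l : ℕ) : ℝ :=
  ∑' P : {P : Polynomial Fq // P.Monic ∧ Irreducible P},
    (uP P.1 ^ l + (-1 : ℝ) ^ l * vP P.1 ^ l)

section Series

variable {ι : Type*}

lemma summable_pow_of_card_fiber_le {d : ι → ℕ} (hfin : ∀ n, (d ⁻¹' {n}).Finite) {b C r : ℝ}
    (hcard : ∀ n, (Nat.card (d ⁻¹' {n}) : ℝ) ≤ C * b ^ n) (hb : 0 ≤ b) (hr : 0 ≤ r)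
    (hbr : b * r < 1) : Summable fun i => r ^ d i := by
  have fiber_finite (n : ℕ) : Finite (d ⁻¹' {n}) := hfin n
  have fiber_sum (n : ℕ) : ∑' i : d ⁻¹' {n}, r ^ d i = Nat.card (d ⁻¹' {n}) * r ^ n := by
    rw [tsum_congr fun i : d ⁻¹' {n} => congrArg (r ^ ·) i.2, tsum_const, nsmul_eq_mul]
  have hgeom : Summable fun n => C * (b * r) ^ n :=
    (summable_geometric_of_lt_one (mul_nonneg hb hr) hbr).mul_left C
  rw [summable_partition (s := fun n => d ⁻¹' {n}) (fun i => pow_nonneg hr (d i))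
    (fun i => ⟨d i, rfl, fun _ h => h.symm⟩)]
  refine ⟨fun n => .of_finite, hgeom.of_nonneg_of_le (fun n => ?_) fun n => ?_⟩
  · exact tsum_nonneg fun i => pow_nonneg hr _
  · calc ∑' i : d ⁻¹' {n}, r ^ d i = Nat.card (d ⁻¹' {n}) * r ^ n := fiber_sum n
      _ ≤ C * b ^ n * r ^ n := by gcongr; exact hcard n
      _ = C * (b * r) ^ n := by rw [mul_pow, mul_assoc]

variable {f : ι → ℝ} {p : ℝ}

lemma rpow_eq_rpow_sub_one_mul {x : ℝ} (hx : 0 ≤ x) (hp : p ≠ 0) : x ^ p = x ^ (p - 1) * x := by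
  rw [← Real.rpow_add_one' hx (by rwa [sub_add_cancel]), sub_add_cancel]

lemma rpow_le_rpow_tsum_mul (hf : ∀ i, 0 ≤ f i) (hs : Summable f) (hp : 1 ≤ p) (i : ι) :
    f i ^ p ≤ (∑' j, f j) ^ (p - 1) * f i := by
  have hle : f i ≤ ∑' j, f j := hs.le_tsum i fun j _ => hf j
  rw [rpow_eq_rpow_sub_one_mul (hf i) (by linarith)]
  exact mul_le_mul_of_nonneg_right (Real.rpow_le_rpow (hf i) hle (by linarith)) (hf i)

lemma summable_rpow_of_one_le (hf : ∀ i, 0 ≤ f i) (hs : Summable f) (hp : 1 ≤ p) :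
    Summable fun i => f i ^ p :=
  (hs.mul_left _).of_nonneg_of_le (fun i => Real.rpow_nonneg (hf i) p)
    (rpow_le_rpow_tsum_mul hf hs hp)

lemma lt_tsum_of_pos_of_ne (hf : ∀ i, 0 ≤ f i) (hs : Summable f) {i j : ι} (hij : i ≠ j)
    (hj : 0 < f j) : f i < ∑' k, f k := by
  classical
  calc f i < f i + f j := lt_add_of_pos_right _ hj
    _ = ∑ k ∈ {i, j}, f k := (Finset.sum_pair hij).symm
    _ ≤ ∑' k, f k := hs.sum_le_tsum _ fun k _ => hf k

lemma tsum_rpow_lt_rpow_tsum (hf : ∀ i, 0 ≤ f i) (hs : Summable f) (hp : 1 < p) {i j : ι}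
    (hij : i ≠ j) (hi : 0 < f i) (hj : 0 < f j) :
    ∑' k, f k ^ p < (∑' k, f k) ^ p := by
  have hlt : f i ^ p < (∑' k, f k) ^ (p - 1) * f i := by
    have hpow : f i ^ (p - 1) < (∑' k, f k) ^ (p - 1) :=
      Real.rpow_lt_rpow (hf i) (lt_tsum_of_pos_of_ne hf hs hij hj) (by linarith)
    rw [rpow_eq_rpow_sub_one_mul (hf i) (by linarith)]
    exact mul_lt_mul_of_pos_right hpow hi
  calc ∑' k, f k ^ p < ∑' k, (∑' j, f j) ^ (p - 1) * f k :=
        (summable_rpow_of_one_le hf hs hp.le).tsum_lt_tsum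
          (rpow_le_rpow_tsum_mul hf hs hp.le) hlt (hs.mul_left _)
    _ = (∑' k, f k) ^ p := by
        rw [tsum_mul_left, ← rpow_eq_rpow_sub_one_mul (tsum_nonneg hf) (by linarith)]

end Series

section PolynomialCount

variable {R : Type*} [Semiring R]

lemma natCard_degreeLT (n : ℕ) : Nat.card (degreeLT R n) = Nat.card R ^ n := by
  rw [Nat.card_congr (degreeLTEquiv R n).toEquiv, Nat.card_fun, Nat.card_fin]

lemma natDegree_fiber_subset_degreeLT (n : ℕ) :
    natDegree ⁻¹' {n} ⊆ (degreeLT R (n + 1) : Set R[X]) := by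
  rintro P rfl
  exact mem_degreeLT.2 (degree_lt_iff_coeff_zero _ _ |>.2 fun m hm =>
    coeff_eq_zero_of_natDegree_lt hm)

lemma summable_pow_natDegree [Finite R] {r : ℝ} (hr : 0 ≤ r) (hRr : Nat.card R * r < 1) :
    Summable fun P : R[X] => r ^ P.natDegree := by
  have degreeLT_finite (n : ℕ) : (degreeLT R n : Set R[X]).Finite :=
    Finite.of_equiv _ (degreeLTEquiv R n).symm.toEquiv
  refine summable_pow_of_card_fiber_le (b := Nat.card R) (C := Nat.card R)
    (fun n => (degreeLT_finite _).subset (natDegree_fiber_subset_degreeLT n)) (fun n => ?_)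
    (Nat.cast_nonneg _) hr hRr
  have hcard : Nat.card (natDegree ⁻¹' {n} : Set R[X]) ≤ Nat.card R ^ (n + 1) :=
    (Nat.card_mono (degreeLT_finite _) (natDegree_fiber_subset_degreeLT n)).trans_eq
      (natCard_degreeLT _)
  rw [← pow_succ']
  exact_mod_cast hcard

end PolynomialCount

section RealInequalities

lemma le_neg_log_one_sub {x : ℝ} (hx : x < 1) : x ≤ -Real.log (1 - x) := by
  linarith [Real.log_le_sub_one_of_pos (sub_pos.2 hx)]

lemma neg_log_one_sub_le_two_mul {x : ℝ} (hx₀ : 0 ≤ x) (hx : x ≤ 1 / 2) :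
    -Real.log (1 - x) ≤ 2 * x := by
  have hpos : 0 < 1 - x := by linarith
  have hinv : (1 - x)⁻¹ ≤ 1 + 2 * x := by
    rw [inv_le_iff_one_le_mul₀ hpos]
    nlinarith
  linarith [Real.one_sub_inv_le_log_of_pos hpos]

variable {u v : ℝ}

lemma pow_add_neg_one_pow_mul_pow_nonneg (hv : 0 ≤ v) (hvu : v ≤ u) (l : ℕ) :
    0 ≤ u ^ l + (-1) ^ l * v ^ l := by
  have hle : v ^ l ≤ u ^ l := pow_le_pow_left₀ hv hvu l
  have hnonneg : 0 ≤ v ^ l := pow_nonneg hv l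
  rcases neg_one_pow_eq_or ℝ l with h | h <;> rw [h] <;> linarith

lemma pow_add_neg_one_pow_mul_pow_le (hu : 0 ≤ u) (hv : 0 ≤ v) {l : ℕ} (hl : 2 ≤ l) :
    u ^ l + (-1) ^ l * v ^ l ≤ (u ^ 2 + v ^ 2) ^ ((l : ℝ) / 2) := by
  have pow_eq {t : ℝ} (ht : 0 ≤ t) : t ^ l = (t ^ 2) ^ ((l : ℝ) / 2) := by
    rw [← Real.rpow_natCast_mul ht, Nat.cast_ofNat, mul_div_cancel₀ _ two_ne_zero,
      Real.rpow_natCast]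
  have hexp : 1 ≤ (l : ℝ) / 2 := by
    rw [one_le_div two_pos]
    exact_mod_cast hl
  have hsign : (-1) ^ l * v ^ l ≤ v ^ l := by
    refine mul_le_of_le_one_left (pow_nonneg hv l) ?_
    rcases neg_one_pow_eq_or ℝ l with h | h <;> rw [h]
    norm_num
  calc u ^ l + (-1) ^ l * v ^ l ≤ u ^ l + v ^ l := by gcongr
    _ = (u ^ 2) ^ ((l : ℝ) / 2) + (v ^ 2) ^ ((l : ℝ) / 2) := by rw [pow_eq hu, pow_eq hv]
    _ ≤ (u ^ 2 + v ^ 2) ^ ((l : ℝ) / 2) :=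
        Real.add_rpow_le_rpow_add (sq_nonneg u) (sq_nonneg v) hexp

end RealInequalities

section Hfun

variable {Fq : Type} [Field Fq] [Fintype Fq] {P : Fq[X]}

lemma inv_card_pow_natDegree_le_half (hP : 0 < P.natDegree) :
    ((Fintype.card Fq : ℝ) ^ P.natDegree)⁻¹ ≤ 1 / 2 := by
  have hq : (2 : ℝ) ≤ Fintype.card Fq := by
    exact_mod_cast (Fintype.one_lt_card : 1 < Fintype.card Fq)
  rw [one_div]
  exact inv_anti₀ two_pos (hq.trans (le_self_pow₀ (by linarith) hP.ne'))

lemma vP_pos (P : Fq[X]) : 0 < vP P :=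
  Real.log_pos (lt_add_of_pos_right _ (by positivity))

lemma vP_le_inv_card_pow (P : Fq[X]) : vP P ≤ ((Fintype.card Fq : ℝ) ^ P.natDegree)⁻¹ :=
  (Real.log_le_sub_one_of_pos (by positivity)).trans_eq (add_sub_cancel_left _ _)

lemma inv_card_pow_le_uP (hP : 0 < P.natDegree) :
    ((Fintype.card Fq : ℝ) ^ P.natDegree)⁻¹ ≤ uP P :=
  le_neg_log_one_sub ((inv_card_pow_natDegree_le_half hP).trans_lt one_half_lt_one)

lemma uP_le_two_mul_inv_card_pow (hP : 0 < P.natDegree) :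
    uP P ≤ 2 * ((Fintype.card Fq : ℝ) ^ P.natDegree)⁻¹ :=
  neg_log_one_sub_le_two_mul (by positivity) (inv_card_pow_natDegree_le_half hP)

lemma vP_le_uP (hP : 0 < P.natDegree) : vP P ≤ uP P :=
  (vP_le_inv_card_pow P).trans (inv_card_pow_le_uP hP)

lemma uP_nonneg (hP : 0 < P.natDegree) : 0 ≤ uP P :=
  (vP_pos P).le.trans (vP_le_uP hP)

lemma uP_sq_add_vP_sq_pos (P : Fq[X]) : 0 < uP P ^ 2 + vP P ^ 2 :=
  add_pos_of_nonneg_of_pos (sq_nonneg _) (pow_pos (vP_pos P) 2)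

lemma uP_sq_add_vP_sq_le (hP : 0 < P.natDegree) :
    uP P ^ 2 + vP P ^ 2 ≤ 5 * ((Fintype.card Fq : ℝ)⁻¹ ^ 2) ^ P.natDegree := by
  calc uP P ^ 2 + vP P ^ 2
      ≤ (2 * ((Fintype.card Fq : ℝ) ^ P.natDegree)⁻¹) ^ 2
          + ((Fintype.card Fq : ℝ) ^ P.natDegree)⁻¹ ^ 2 :=
        add_le_add (pow_le_pow_left₀ (uP_nonneg hP) (uP_le_two_mul_inv_card_pow hP) 2)
          (pow_le_pow_left₀ (vP_pos P).le (vP_le_inv_card_pow P) 2)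
    _ = 5 * ((Fintype.card Fq : ℝ)⁻¹ ^ 2) ^ P.natDegree := by
        rw [← inv_pow, pow_right_comm]
        ring

variable (Fq)

lemma summable_inv_card_sq_pow_natDegree :
    Summable fun P : Fq[X] => ((Fintype.card Fq : ℝ)⁻¹ ^ 2) ^ P.natDegree := by
  have hq : (1 : ℝ) < Fintype.card Fq := by exact_mod_cast Fintype.one_lt_card
  refine summable_pow_natDegree (by positivity) ?_
  rw [Nat.card_eq_fintype_card, sq, mul_inv_cancel_left₀ (by positivity)]
  exact inv_lt_one_of_one_lt₀ hq

lemma summable_uP_sq_add_vP_sq :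
    Summable fun P : {P : Fq[X] // P.Monic ∧ Irreducible P} => uP P.1 ^ 2 + vP P.1 ^ 2 :=
  (((summable_inv_card_sq_pow_natDegree Fq).subtype _).mul_left 5).of_nonneg_of_le
    (fun P => (uP_sq_add_vP_sq_pos P.1).le) fun P => uP_sq_add_vP_sq_le P.2.2.natDegree_pos

lemma hfun_two : hfun Fq 2 =
    ∑' P : {P : Fq[X] // P.Monic ∧ Irreducible P}, (uP P.1 ^ 2 + vP P.1 ^ 2) := by
  simp only [hfun, neg_one_sq, one_mul]

lemma hfun_le_tsum_rpow {l : ℕ} (hl : 2 ≤ l) :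
    hfun Fq l ≤ ∑' P : {P : Fq[X] // P.Monic ∧ Irreducible P},
      (uP P.1 ^ 2 + vP P.1 ^ 2) ^ ((l : ℝ) / 2) := by
  have hexp : 1 ≤ (l : ℝ) / 2 := by
    rw [one_le_div two_pos]
    exact_mod_cast hl
  have hle (P : {P : Fq[X] // P.Monic ∧ Irreducible P}) :
      uP P.1 ^ l + (-1) ^ l * vP P.1 ^ l ≤ (uP P.1 ^ 2 + vP P.1 ^ 2) ^ ((l : ℝ) / 2) :=
    pow_add_neg_one_pow_mul_pow_le (uP_nonneg P.2.2.natDegree_pos) (vP_pos P.1).le hl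
  have hnonneg (P : {P : Fq[X] // P.Monic ∧ Irreducible P}) :
      0 ≤ uP P.1 ^ l + (-1) ^ l * vP P.1 ^ l :=
    pow_add_neg_one_pow_mul_pow_nonneg (vP_pos P.1).le (vP_le_uP P.2.2.natDegree_pos) l
  have hsum : Summable fun P : {P : Fq[X] // P.Monic ∧ Irreducible P} =>
      (uP P.1 ^ 2 + vP P.1 ^ 2) ^ ((l : ℝ) / 2) :=
    summable_rpow_of_one_le (fun P => (uP_sq_add_vP_sq_pos P.1).le)
      (summable_uP_sq_add_vP_sq Fq) hexp
  exact (hsum.of_nonneg_of_le hnonneg hle).tsum_le_tsum hle hsum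

theorem hfun_three_lt_general {l : ℕ} (hl : 2 < l) :
    hfun Fq l < hfun Fq 2 ^ ((l : ℝ) / 2) := by
  let PX : {P : Fq[X] // P.Monic ∧ Irreducible P} := ⟨X, monic_X, irreducible_X⟩
  let PX1 : {P : Fq[X] // P.Monic ∧ Irreducible P} :=
    ⟨X - C 1, monic_X_sub_C 1, irreducible_X_sub_C 1⟩
  have hne : PX ≠ PX1 := fun h => by
    simpa [PX, PX1] using congrArg (fun P => P.1.coeff 0) h
  have hexp : 1 < (l : ℝ) / 2 := by
    rw [one_lt_div two_pos]
    exact_mod_cast hl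
  calc hfun Fq l ≤ ∑' P : {P : Fq[X] // P.Monic ∧ Irreducible P},
        (uP P.1 ^ 2 + vP P.1 ^ 2) ^ ((l : ℝ) / 2) := hfun_le_tsum_rpow Fq hl.le
    _ < (∑' P : {P : Fq[X] // P.Monic ∧ Irreducible P},
        (uP P.1 ^ 2 + vP P.1 ^ 2)) ^ ((l : ℝ) / 2) :=
      tsum_rpow_lt_rpow_tsum (fun P => (uP_sq_add_vP_sq_pos P.1).le)
        (summable_uP_sq_add_vP_sq Fq) hexp hne (uP_sq_add_vP_sq_pos PX.1)
        (uP_sq_add_vP_sq_pos PX1.1)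
    _ = hfun Fq 2 ^ ((l : ℝ) / 2) := by rw [hfun_two]

end Hfun

/-- For every prime power `q` (realized as the cardinality of a finite field `Fq`),
one has `h(3) < h(2)^(3/2)` (real power). -/
theorem hfun_three_lt (Fq : Type) [Field Fq] [Fintype Fq] :
    hfun Fq 3 < hfun Fq 2 ^ ((3 : ℝ) / 2) := by
  exact_mod_cast hfun_three_lt_general Fq (l := 3) (by norm_num)
end

section
/- For every even integer λ ≥ 2 there is a constant C_λ > 0, depending only on λ, such that for every prime power q one has |z(λ) − 2 q^{1−λ}| ≤ C_λ q^{−λ}, where z(λ) = ∑_P (u_P^λ + v_P^λ)/(1 + |P|^{−1}), the sum over all monic irreducible polynomials P ∈ 𝔽_q[X]. -/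
/-!
The summand depends on `P` only through `x = |P|⁻¹`, and the first-order expansion of `log (1 ± x)`
shows that it is `2 x ^ l + O(x ^ (l + 1))`. Grouping the primes by degree, the `q` linear ones
contribute `2 q ^ (1 - l) + O(q ^ (-l))`. There are at most `q ^ n` primes of degree `n`, so those
of degree at least `2` contribute at most a geometric tail with ratio `r = q ^ (1 - l) ≤ 1 / 2`,
which is `O(r ^ 2)`; this is `O(q ^ (-l))` because `l ≥ 2`.
-/

open Polynomial

section FiberwiseSum

variable {S ι E : Type*} [NormedAddCommGroup E] [CompleteSpace E]
  {d : S → ι} {f : ι → E}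

theorem summable_comp_of_summable_ncard_mul_norm [∀ i, Finite (d ⁻¹' {i})]
    (h : Summable fun i ↦ ((d ⁻¹' {i}).ncard : ℝ) * ‖f i‖) : Summable fun s ↦ f (d s) := by
  have fiber_eq : ∀ i, (fun s : d ⁻¹' {i} ↦ ‖f (d s)‖) = fun _ ↦ ‖f i‖ :=
    fun i ↦ funext fun s ↦ by rw [s.2]
  refine .of_norm <| (summable_partition (fun s ↦ norm_nonneg (f (d s)))
    (s := fun i ↦ d ⁻¹' {i}) fun s ↦ ⟨d s, rfl, fun i hi ↦ hi.symm⟩).2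
    ⟨fun i ↦ .of_finite, ?_⟩
  simpa only [fiber_eq, tsum_const, nsmul_eq_mul, Nat.card_coe_set_eq] using h

theorem hasSum_ncard_nsmul_tsum_comp (h : Summable fun s ↦ f (d s)) :
    HasSum (fun i ↦ (d ⁻¹' {i}).ncard • f i) (∑' s, f (d s)) := by
  have fiber_eq : ∀ i, (fun s : d ⁻¹' {i} ↦ f (d s)) = fun _ ↦ f i :=
    fun i ↦ funext fun s ↦ by rw [s.2]
  simpa only [fiber_eq, tsum_const, Nat.card_coe_set_eq] using h.hasSum.tsum_fiberwise d

end FiberwiseSum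

theorem card_monic_natDegree_eq (R : Type*) [Ring R] [Nontrivial R] (n : ℕ) :
    Nat.card {p : R[X] // p.Monic ∧ p.natDegree = n} = Nat.card R ^ n := by
  rw [Nat.card_congr ((monicEquivDegreeLT n).trans (degreeLTEquiv R n).toEquiv), Nat.card_fun,
    Nat.card_fin]

theorem finite_monic_natDegree_eq (R : Type*) [Ring R] [Nontrivial R] [Finite R] (n : ℕ) :
    Finite {p : R[X] // p.Monic ∧ p.natDegree = n} :=
  .of_equiv _ ((monicEquivDegreeLT n).trans (degreeLTEquiv R n).toEquiv).symm

/-- The primes of `K[X]`: its monic irreducible polynomials. -/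
abbrev MonicIrreducible (K : Type*) [Field K] : Type _ :=
  {P : K[X] // P.Monic ∧ Irreducible P}

namespace MonicIrreducible

variable {K : Type*} [Field K]

/-- The degree of a prime of `K[X]`, as a map whose fibers partition the primes. -/
abbrev degree (P : MonicIrreducible K) : ℕ := P.1.natDegree

variable (K) in
/-- The number of primes of `K[X]` of degree `n`, with value `0` where there are infinitely
many. -/
noncomputable def count (n : ℕ) : ℕ := (degree ⁻¹' {n} : Set (MonicIrreducible K)).ncard

/-- The inclusion of the primes of degree `n` into the monic polynomials of degree `n`. -/
def toMonic (n : ℕ) (P : (degree ⁻¹' {n} : Set (MonicIrreducible K))) :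
    {p : K[X] // p.Monic ∧ p.natDegree = n} :=
  ⟨P.1.1, P.1.2.1, P.2⟩

theorem toMonic_injective (n : ℕ) : Function.Injective (toMonic (K := K) n) :=
  fun _ _ h ↦ Subtype.ext <| Subtype.ext <| congrArg (fun p ↦ p.1) h

theorem count_zero : count K 0 = 0 := by
  have : (degree ⁻¹' {0} : Set (MonicIrreducible K)) = ∅ :=
    Set.eq_empty_of_forall_notMem fun P hP ↦ P.2.2.natDegree_pos.ne' hP
  rw [count, this, Set.ncard_empty]

theorem count_one : count K 1 = Nat.card K := by
  refine (Nat.card_eq_of_bijective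
    (fun a : K ↦ (⟨⟨X - C a, monic_X_sub_C a, irreducible_X_sub_C a⟩, natDegree_X_sub_C a⟩ :
      (degree ⁻¹' {1} : Set (MonicIrreducible K)))) ⟨fun a b h ↦ ?_, fun P ↦ ?_⟩).symm
  · have : (X - C a : K[X]) = X - C b := congrArg (fun P ↦ P.1.1) h
    exact C_injective (sub_right_injective this)
  · refine ⟨-P.1.1.coeff 0, Subtype.ext <| Subtype.ext ?_⟩
    simpa using (P.1.2.1.eq_X_add_C P.2).symm

theorem hasSum_count_nsmul {E : Type*} [NormedAddCommGroup E] [CompleteSpace E] {f : ℕ → E}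
    (h : Summable fun P : MonicIrreducible K ↦ f P.degree) :
    HasSum (fun n ↦ count K n • f n) (∑' P : MonicIrreducible K, f P.degree) :=
  hasSum_ncard_nsmul_tsum_comp h

variable [Finite K]

instance finite_degree_fiber (n : ℕ) : Finite (degree ⁻¹' {n} : Set (MonicIrreducible K)) :=
  have := finite_monic_natDegree_eq K n
  .of_injective _ (toMonic_injective n)

theorem count_le (n : ℕ) : count K n ≤ Nat.card K ^ n :=
  have := finite_monic_natDegree_eq K n
  (Nat.card_le_card_of_injective _ (toMonic_injective n)).trans_eq (card_monic_natDegree_eq K n)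

theorem summable_of_summable_count_mul_norm {E : Type*} [NormedAddCommGroup E] [CompleteSpace E]
    {f : ℕ → E} (h : Summable fun n ↦ (count K n : ℝ) * ‖f n‖) :
    Summable fun P : MonicIrreducible K ↦ f P.degree :=
  summable_comp_of_summable_ncard_mul_norm h

end MonicIrreducible

section Powers

variable {q : ℝ} {l : ℕ}

theorem pow_mul_inv_pow_pow (hq : q ≠ 0) (l n : ℕ) :
    q ^ n * ((q ^ n)⁻¹) ^ l = (q ^ (1 - l : ℤ)) ^ n := by
  rw [zpow_sub₀ hq, zpow_one, zpow_natCast, div_pow, inv_pow, ← pow_mul, ← pow_mul, mul_comm n,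
    div_eq_mul_inv]

theorem zpow_one_sub_le_half (hq : 2 ≤ q) (hl : 2 ≤ l) : q ^ (1 - l : ℤ) ≤ 1 / 2 :=
  calc q ^ (1 - l : ℤ) ≤ q ^ (-1 : ℤ) := zpow_le_zpow_right₀ (by linarith) (by lia)
    _ = q⁻¹ := zpow_neg_one q
    _ ≤ 2⁻¹ := inv_anti₀ two_pos hq
    _ = 1 / 2 := inv_eq_one_div 2

theorem zpow_one_sub_sq_le (hq : 1 ≤ q) (hl : 2 ≤ l) : (q ^ (1 - l : ℤ)) ^ 2 ≤ (q ^ l)⁻¹ :=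
  calc (q ^ (1 - l : ℤ)) ^ 2 = q ^ ((1 - l : ℤ) * 2) := by rw [zpow_mul, zpow_ofNat]
    _ ≤ q ^ (-l : ℤ) := zpow_le_zpow_right₀ hq (by lia)
    _ = (q ^ l)⁻¹ := by rw [zpow_neg, zpow_natCast]

theorem inv_pow_mem_Icc_zero_half (hq : 2 ≤ q) {n : ℕ} (hn : n ≠ 0) :
    (q ^ n)⁻¹ ∈ Set.Icc (0 : ℝ) (1 / 2) := by
  refine ⟨by positivity, ?_⟩
  rw [one_div]
  exact inv_anti₀ two_pos (hq.trans (le_self_pow₀ (by linarith) hn))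

end Powers

theorem two_le_cast_card (α : Type*) [Finite α] [Nontrivial α] : (2 : ℝ) ≤ Nat.card α := by
  exact_mod_cast Finite.one_lt_card (α := α)

/-- The expansion `f x = c * x ^ l + O(x ^ (l + 1))` on `[0, 1 / 2]`, with explicit constant `A`.
The interval is the one containing `|P|⁻¹` for all primes `P` over all finite fields. -/
def HasLeadingTerm (f : ℝ → ℝ) (c : ℝ) (l : ℕ) (A : ℝ) : Prop :=
  ∀ x ∈ Set.Icc (0 : ℝ) (1 / 2), |f x - c * x ^ l| ≤ A * x ^ (l + 1)

namespace HasLeadingTerm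

variable {f : ℝ → ℝ} {c A : ℝ} {l : ℕ}

theorem const_nonneg (hf : HasLeadingTerm f c l A) : 0 ≤ A :=
  nonneg_of_mul_nonneg_left ((abs_nonneg _).trans (hf (1 / 2) (by norm_num))) (by positivity)

theorem abs_le (hf : HasLeadingTerm f c l A) {x : ℝ} (hx : x ∈ Set.Icc (0 : ℝ) (1 / 2)) :
    |f x| ≤ (|c| + A) * x ^ l := by
  have hA := hf.const_nonneg
  have hxl : 0 ≤ x ^ l := pow_nonneg hx.1 l
  have hpow : x ^ (l + 1) ≤ x ^ l :=
    pow_le_pow_of_le_one hx.1 (by linarith [hx.2]) l.le_succ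
  calc |f x| ≤ |c * x ^ l| + |f x - c * x ^ l| := by
        simpa using abs_add_le (c * x ^ l) (f x - c * x ^ l)
    _ ≤ |c| * x ^ l + A * x ^ l := by
        rw [abs_mul, abs_of_nonneg hxl]
        gcongr
        exact (hf x hx).trans (by gcongr)
    _ = (|c| + A) * x ^ l := by ring

variable {K : Type*} [Field K] [Finite K]

theorem count_mul_abs_le (hf : HasLeadingTerm f c l A) (n : ℕ) :
    (MonicIrreducible.count K n : ℝ) * |f ((Nat.card K : ℝ) ^ n)⁻¹| ≤
      (|c| + A) * ((Nat.card K : ℝ) ^ (1 - l : ℤ)) ^ n := by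
  have hA := hf.const_nonneg
  have hq := two_le_cast_card K
  rcases eq_or_ne n 0 with rfl | hn
  · simp only [MonicIrreducible.count_zero, Nat.cast_zero, zero_mul]
    positivity
  have hx := inv_pow_mem_Icc_zero_half hq hn
  calc (MonicIrreducible.count K n : ℝ) * |f ((Nat.card K : ℝ) ^ n)⁻¹|
      ≤ (Nat.card K : ℝ) ^ n * ((|c| + A) * (((Nat.card K : ℝ) ^ n)⁻¹) ^ l) := by
        gcongr
        · exact_mod_cast MonicIrreducible.count_le n
        · exact hf.abs_le hx
    _ = (|c| + A) * ((Nat.card K : ℝ) ^ (1 - l : ℤ)) ^ n := by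
        rw [← pow_mul_inv_pow_pow (by linarith), mul_left_comm]

theorem summable_inv_card_pow_degree (hf : HasLeadingTerm f c l A) (hl : 2 ≤ l) :
    Summable fun P : MonicIrreducible K ↦ f ((Nat.card K : ℝ) ^ P.degree)⁻¹ := by
  have hr := zpow_one_sub_le_half (two_le_cast_card K) hl
  have hgeom : Summable fun n ↦ (|c| + A) * ((Nat.card K : ℝ) ^ (1 - l : ℤ)) ^ n :=
    (summable_geometric_of_lt_one (by positivity) (by linarith)).mul_left _
  exact MonicIrreducible.summable_of_summable_count_mul_norm
    (f := fun n ↦ f ((Nat.card K : ℝ) ^ n)⁻¹)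
    (.of_nonneg_of_le (fun n ↦ by positivity) hf.count_mul_abs_le hgeom)

theorem abs_tsum_sub_linear_le (hf : HasLeadingTerm f c l A) (hl : 2 ≤ l) :
    |(∑' P : MonicIrreducible K, f ((Nat.card K : ℝ) ^ P.degree)⁻¹) -
        Nat.card K * f (Nat.card K : ℝ)⁻¹| ≤ 2 * (|c| + A) * ((Nat.card K : ℝ) ^ l)⁻¹ := by
  have hq := two_le_cast_card K
  have hA := hf.const_nonneg
  set r : ℝ := (Nat.card K : ℝ) ^ (1 - l : ℤ)
  have hr : r ≤ 1 / 2 := zpow_one_sub_le_half hq hl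
  have hr_sq : r ^ 2 ≤ ((Nat.card K : ℝ) ^ l)⁻¹ := zpow_one_sub_sq_le (by linarith) hl
  have hbound : ∀ n, ‖MonicIrreducible.count K n • f ((Nat.card K : ℝ) ^ n)⁻¹‖ ≤
      (|c| + A) * r ^ n := fun n ↦ by
    simpa only [nsmul_eq_mul, norm_mul, RCLike.norm_natCast, Real.norm_eq_abs] using
      hf.count_mul_abs_le n
  have hsum := MonicIrreducible.hasSum_count_nsmul (f := fun n ↦ f ((Nat.card K : ℝ) ^ n)⁻¹)
    (hf.summable_inv_card_pow_degree hl)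
  have htail := norm_sub_le_of_geometric_bound_of_hasSum (by linarith) hbound hsum 2
  simp only [Finset.sum_range_succ, Finset.sum_range_zero, MonicIrreducible.count_zero,
    MonicIrreducible.count_one, nsmul_eq_mul, Nat.cast_zero, zero_mul, zero_add, pow_one] at htail
  rw [norm_sub_rev, Real.norm_eq_abs] at htail
  calc _ ≤ (|c| + A) * r ^ 2 / (1 - r) := htail
    _ ≤ (|c| + A) * r ^ 2 / (1 / 2) := by gcongr; linarith
    _ = 2 * (|c| + A) * r ^ 2 := by ring
    _ ≤ 2 * (|c| + A) * ((Nat.card K : ℝ) ^ l)⁻¹ := by gcongr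

theorem abs_mul_inv_sub_zpow_le (hf : HasLeadingTerm f c l A) {q : ℝ} (hq : 2 ≤ q) :
    |q * f q⁻¹ - c * q ^ (1 - l : ℤ)| ≤ A * (q ^ l)⁻¹ := by
  have hq₀ : 0 < q := by linarith
  have hpow : q ^ (1 - l : ℤ) = q * q⁻¹ ^ l := by
    simpa using (pow_mul_inv_pow_pow hq₀.ne' l 1).symm
  have hx : q⁻¹ ∈ Set.Icc (0 : ℝ) (1 / 2) := by
    simpa using inv_pow_mem_Icc_zero_half hq one_ne_zero
  calc |q * f q⁻¹ - c * q ^ (1 - l : ℤ)| = q * |f q⁻¹ - c * q⁻¹ ^ l| := by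
        rw [hpow, mul_left_comm, ← mul_sub, abs_mul, abs_of_pos hq₀]
    _ ≤ q * (A * q⁻¹ ^ (l + 1)) := by gcongr; exact hf _ hx
    _ = A * (q ^ l)⁻¹ := by
        rw [pow_succ, mul_left_comm, mul_left_comm q, mul_inv_cancel₀ hq₀.ne', mul_one, inv_pow]

theorem abs_tsum_monicIrreducible_sub_le (hf : HasLeadingTerm f c l A) (hl : 2 ≤ l) :
    |(∑' P : MonicIrreducible K, f ((Nat.card K : ℝ) ^ P.degree)⁻¹) -
        c * (Nat.card K : ℝ) ^ (1 - l : ℤ)| ≤ (2 * |c| + 3 * A) * ((Nat.card K : ℝ) ^ l)⁻¹ := by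
  have htail := hf.abs_tsum_sub_linear_le (K := K) hl
  have hlinear := hf.abs_mul_inv_sub_zpow_le (two_le_cast_card K)
  calc _ ≤ _ + _ := abs_sub_le _ (Nat.card K * f (Nat.card K : ℝ)⁻¹) _
    _ ≤ _ + _ := add_le_add htail hlinear
    _ = _ := by ring

end HasLeadingTerm

section LogExpansion

theorem abs_log_one_add_sub_le {t : ℝ} (ht : |t| ≤ 1 / 2) :
    |Real.log (1 + t) - t| ≤ 2 * t ^ 2 := by
  have h := Real.abs_log_sub_add_sum_range_le (x := -t) (by rw [abs_neg]; linarith) 1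
  calc |Real.log (1 + t) - t| ≤ t ^ 2 / (1 - |t|) := by
        simpa [sub_eq_neg_add, add_comm] using h
    _ ≤ t ^ 2 / (1 / 2) := by gcongr; linarith
    _ = 2 * t ^ 2 := by ring

theorem abs_log_one_add_pow_sub_pow_le (l : ℕ) {t : ℝ} (ht : |t| ≤ 1 / 2) :
    |Real.log (1 + t) ^ l - t ^ l| ≤ l * 2 ^ l * |t| ^ (l + 1) := by
  have hlog : |Real.log (1 + t) - t| ≤ 2 * |t| ^ 2 := by
    simpa only [sq_abs] using abs_log_one_add_sub_le ht
  have hmax : max |Real.log (1 + t)| |t| ≤ 2 * |t| := by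
    have := abs_sub_abs_le_abs_sub (Real.log (1 + t)) t
    refine max_le ?_ ?_ <;> nlinarith [abs_nonneg t]
  rcases l with _ | l
  · simp
  calc |Real.log (1 + t) ^ (l + 1) - t ^ (l + 1)|
      ≤ |Real.log (1 + t) - t| * (l + 1 : ℕ) * max |Real.log (1 + t)| |t| ^ l :=
        abs_pow_sub_pow_le _ _ _
    _ ≤ 2 * |t| ^ 2 * (l + 1 : ℕ) * (2 * |t|) ^ l := by gcongr
    _ = (l + 1 : ℕ) * 2 ^ (l + 1) * |t| ^ (l + 1 + 1) := by ring

theorem abs_neg_log_one_sub_pow_sub_pow_le (l : ℕ) {t : ℝ} (ht : |t| ≤ 1 / 2) :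
    |(-Real.log (1 - t)) ^ l - t ^ l| ≤ l * 2 ^ l * |t| ^ (l + 1) := by
  have hsign : (-Real.log (1 - t)) ^ l - t ^ l =
      (-1) ^ l * (Real.log (1 + -t) ^ l - (-t) ^ l) := by
    rw [mul_sub, ← mul_pow, ← mul_pow, neg_one_mul, neg_one_mul, neg_neg, sub_eq_add_neg 1 t]
  rw [hsign, abs_mul, abs_neg_one_pow, one_mul, ← abs_neg t]
  exact abs_log_one_add_pow_sub_pow_le l ((abs_neg t).trans_le ht)

/-- The summand of `z(l)` as a function of `x = |P|⁻¹`. -/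
noncomputable def zSummand (l : ℕ) (x : ℝ) : ℝ :=
  ((-Real.log (1 - x)) ^ l + Real.log (1 + x) ^ l) / (1 + x)

theorem hasLeadingTerm_zSummand (l : ℕ) :
    HasLeadingTerm (zSummand l) 2 l (2 * (l * 2 ^ l) + 2) := by
  rintro x ⟨hx₀, hx₁⟩
  have hv : |Real.log (1 + x) ^ l - x ^ l| ≤ l * 2 ^ l * x ^ (l + 1) := by
    simpa only [abs_of_nonneg hx₀] using
      abs_log_one_add_pow_sub_pow_le l ((abs_of_nonneg hx₀).trans_le hx₁)
  have hu : |(-Real.log (1 - x)) ^ l - x ^ l| ≤ l * 2 ^ l * x ^ (l + 1) := by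
    simpa only [abs_of_nonneg hx₀] using
      abs_neg_log_one_sub_pow_sub_pow_le l ((abs_of_nonneg hx₀).trans_le hx₁)
  have hexpand : zSummand l x - 2 * x ^ l = (((-Real.log (1 - x)) ^ l - x ^ l) +
      (Real.log (1 + x) ^ l - x ^ l) - 2 * x ^ (l + 1)) / (1 + x) := by
    unfold zSummand
    field_simp
    ring
  have hpow : |2 * x ^ (l + 1)| = 2 * x ^ (l + 1) := abs_of_nonneg (by positivity)
  calc |zSummand l x - 2 * x ^ l|
      ≤ |((-Real.log (1 - x)) ^ l - x ^ l) + (Real.log (1 + x) ^ l - x ^ l) -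
          2 * x ^ (l + 1)| := by
        rw [hexpand, abs_div, abs_of_pos (by linarith : 0 < 1 + x)]
        exact div_le_self (abs_nonneg _) (by linarith)
    _ ≤ |(-Real.log (1 - x)) ^ l - x ^ l| + |Real.log (1 + x) ^ l - x ^ l| +
          |2 * x ^ (l + 1)| :=
        (abs_sub _ _).trans (by gcongr; exact abs_add_le _ _)
    _ ≤ l * 2 ^ l * x ^ (l + 1) + l * 2 ^ l * x ^ (l + 1) + 2 * x ^ (l + 1) := by
        rw [hpow]
        gcongr
    _ = (2 * (l * 2 ^ l) + 2) * x ^ (l + 1) := by ring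

end LogExpansion

theorem z_even_asymptotic_general (l : ℕ) (hl : 2 ≤ l) :
    ∃ C : ℝ, 0 < C ∧
      ∀ (Fq : Type) [Field Fq] [Fintype Fq],
        |(∑' P : {P : Polynomial Fq // P.Monic ∧ Irreducible P},
            (uP P.1 ^ l + vP P.1 ^ l) /
              (1 + ((Fintype.card Fq : ℝ) ^ P.1.natDegree)⁻¹))
          - 2 * (Fintype.card Fq : ℝ) ^ ((1 : ℤ) - (l : ℤ))|
        ≤ C * ((Fintype.card Fq : ℝ) ^ l)⁻¹ := by
  refine ⟨2 * |2| + 3 * (2 * (l * 2 ^ l) + 2), by positivity, fun Fq _ _ ↦ ?_⟩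
  simpa only [Nat.card_eq_fintype_card, zSummand, uP, vP] using
    (hasLeadingTerm_zSummand l).abs_tsum_monicIrreducible_sub_le (K := Fq) hl

/-- For every even integer `λ ≥ 2` there is a constant `C_λ > 0` such that for every
prime power `q` (realized as the cardinality of a finite field `Fq`) one has
`|z(λ) - 2 q^(1-λ)| ≤ C_λ q^(-λ)`, where
`z(λ) = ∑_P (u_P^λ + v_P^λ)/(1 + |P|⁻¹)`, the sum over all monic irreducible
polynomials `P ∈ Fq[X]`. -/
theorem z_even_asymptotic (l : ℕ) (hl : 2 ≤ l) (hev : Even l) :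
    ∃ C : ℝ, 0 < C ∧
      ∀ (Fq : Type) [Field Fq] [Fintype Fq],
        |(∑' P : {P : Polynomial Fq // P.Monic ∧ Irreducible P},
            (uP P.1 ^ l + vP P.1 ^ l) /
              (1 + ((Fintype.card Fq : ℝ) ^ P.1.natDegree)⁻¹))
          - 2 * (Fintype.card Fq : ℝ) ^ ((1 : ℤ) - (l : ℤ))|
        ≤ C * ((Fintype.card Fq : ℝ) ^ l)⁻¹ :=
  z_even_asymptotic_general l hl
end
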